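/- arXiv:1110.6239 — 2 statements merged into one kernel-verified Lean document; each statement's English description precedes it below -/
import Mathlib

section
/- Let (A, m) be a noetherian local ring with maximal ideal m and infinite residue field k = A/m, let I_1, ..., I_s be ideals of A, let Σ be a finite set of prime ideals of A, and let M be a finitely generated A-module. If for some i ∈ {1, ..., s} the ideal I_i is contained in no prime ideal of Σ, then there exists a non-empty Zariski open subset U of the k-vector space I_i/mI_i such that for every element x ∈ I_i whose image x + mI_i lies in U: (a) x is not contained in any prime ideal of Σ, and (b) x is a Rees superficial element of (I_1, ..., I_s) with respect to M, i.e., xM ∩ I_1^{n_1}···I_i^{n_i}···I_s^{n_s}M = x I_1^{n_1}···I_i^{n_i−1}···I_s^{n_s}M for all sufficiently large n_i and all n_1, ..., n_{i−1}, n_{i+1}, ..., n_s ≥ 0. -/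
open IsLocalRing

section MixedMultDefs

variable (A : Type*) [CommRing A]

/-- The length of an `A`-module `M`, defined as the height of `⊤` in the lattice of
submodules of `M` (i.e. the supremum of lengths of chains of submodules). -/
noncomputable def modLength (M : Type*) [AddCommGroup M] [Module A M] : ℕ∞ :=
  Order.height (⊤ : Submodule A M)

/-- The length of a module as a natural number (`0` if the length is infinite). -/
noncomputable def lenNat (M : Type*) [AddCommGroup M] [Module A M] : ℕ :=
  (modLength A M).toNat

/-- The height of an ideal: the infimum of the heights of the prime ideals containing it. -/
noncomputable def idealHeight (I : Ideal A) : ℕ∞ :=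
  ⨅ (p : PrimeSpectrum A) (_ : I ≤ p.asIdeal), Order.height p

/-- The Krull dimension of a module `M`, i.e. the Krull dimension of `A / Ann_A M`. -/
noncomputable def modDim (M : Type*) [AddCommGroup M] [Module A M] : WithBot ℕ∞ :=
  ringKrullDim (A ⧸ Module.annihilator A M)

/-- `x` is a Rees superficial element of the family of ideals `I = (I 0, …, I (t-1))` with
respect to `M`, as an element of the ideal `I i`:  `x ∈ I i` and
`xM ∩ I_1^{n_1} ⋯ I_i^{n_i + 1} ⋯ I_t^{n_t} M = x I_1^{n_1} ⋯ I_i^{n_i} ⋯ I_t^{n_t} M`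
for all sufficiently large `n i` and arbitrary other exponents. -/
def IsReesSuperficial (M : Type*) [AddCommGroup M] [Module A M] {t : ℕ}
    (I : Fin t → Ideal A) (i : Fin t) (x : A) : Prop :=
  x ∈ I i ∧ ∃ N : ℕ, ∀ n : Fin t → ℕ, N ≤ n i →
    (Ideal.span {x} • (⊤ : Submodule A M)) ⊓
        ((∏ j, I j ^ (n j + if j = i then 1 else 0)) • (⊤ : Submodule A M)) =
      Ideal.span {x} • ((∏ j, I j ^ (n j)) • (⊤ : Submodule A M))

/-- `x 0, …, x (t-1)` is a Rees superficial sequence of the family `I` with respect to `M`,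
where the assignment `c` records to which ideal each element of the sequence belongs:
`x i` is a Rees superficial element of `I`, as an element of `I (c i)`, with respect to
`M / (x 0, …, x (i-1)) M`. -/
def IsReesSuperficialSeq (M : Type*) [AddCommGroup M] [Module A M] {t s : ℕ}
    (I : Fin s → Ideal A) (x : Fin t → A) (c : Fin t → Fin s) : Prop :=
  ∀ i : Fin t,
    IsReesSuperficial A
      (M ⧸ ((Ideal.span (x '' {j | (j : ℕ) < (i : ℕ)})) • (⊤ : Submodule A M)))
      I (c i) (x i)

/-- The assignment `c` has type `(k 0, …, k (s-1))`: for each `i`, exactly `k i` members of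
the sequence are assigned to the ideal indexed by `i`. -/
def OfTypeCount {t s : ℕ} (c : Fin t → Fin s) (k : Fin s → ℕ) : Prop :=
  ∀ i : Fin s, (Finset.univ.filter fun j => c j = i).card = k i

/-- The ideal generated by the members of the sequence `x` assigned (by `c`) to index `i`. -/
def jrIdeal {t s : ℕ} (x : Fin t → A) (c : Fin t → Fin s) (i : Fin s) : Ideal A :=
  Ideal.span (x '' {j | c j = i})

/-- The defining equation of a joint reduction:  all members of the sequence lie in their
assigned ideals, and `I_1^{n_1+1} ⋯ I_s^{n_s+1} M = Σ_i (𝔍_i) I_1^{n_1+1} ⋯ I_i^{n_i} ⋯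
I_s^{n_s+1} M` for all sufficiently large `n_1, …, n_s`, where `𝔍_i` consists of the
members of the sequence assigned to `I i`. -/
def IsJointReductionEq (M : Type*) [AddCommGroup M] [Module A M] {t s : ℕ}
    (I : Fin s → Ideal A) (x : Fin t → A) (c : Fin t → Fin s) : Prop :=
  (∀ j, x j ∈ I (c j)) ∧
  ∃ N : ℕ, ∀ n : Fin s → ℕ, (∀ i, N ≤ n i) →
    ((∏ i, I i ^ (n i + 1)) • (⊤ : Submodule A M)) =
      ∑ i : Fin s, jrIdeal A x c i •
        ((∏ j, I j ^ (n j + if j = i then 0 else 1)) • (⊤ : Submodule A M))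

/-- A joint reduction of the family `I` with respect to `M` of type `k`. -/
def IsJointReduction (M : Type*) [AddCommGroup M] [Module A M] {t s : ℕ}
    (I : Fin s → Ideal A) (x : Fin t → A) (c : Fin t → Fin s) (k : Fin s → ℕ) : Prop :=
  IsJointReductionEq A M I x c ∧ OfTypeCount c k

/-- `x 1, …, x d` is a system of parameters for `M`:  `d = dim M`, the `x j` lie in the
maximal ideal, and `M / (x 1, …, x d) M` has finite length. -/
def IsSOP [IsLocalRing A] (M : Type*) [AddCommGroup M] [Module A M] {d : ℕ}
    (x : Fin d → A) : Prop :=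
  modDim A M = (d : ℕ∞) ∧ (∀ j, x j ∈ maximalIdeal A) ∧
    IsFiniteLength A (M ⧸ ((Ideal.span (Set.range x)) • (⊤ : Submodule A M)))

/-- `e` is the Hilbert–Samuel multiplicity of the ideal `q` on the `d`-dimensional module
`M`: the function `n ↦ ℓ_A(M / q^n M)` is eventually given by a polynomial of degree at
most `d` with `n^d`-coefficient `e / d!`. -/
def IsHSMult (M : Type*) [AddCommGroup M] [Module A M] (q : Ideal A) (d : ℕ) (e : ℕ) :
    Prop :=
  ∃ P : Polynomial ℚ, P.natDegree ≤ d ∧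
    (∃ N : ℕ, ∀ n : ℕ, N ≤ n →
      IsFiniteLength A (M ⧸ (q ^ n • (⊤ : Submodule A M))) ∧
      (lenNat A (M ⧸ (q ^ n • (⊤ : Submodule A M))) : ℚ) = P.eval (n : ℚ)) ∧
    (e : ℚ) = P.coeff d * (Nat.factorial d : ℚ)

/-- The subquotient `J^{n_0} I_1^{n_1} ⋯ I_s^{n_s} M / J^{n_0+1} I_1^{n_1} ⋯ I_s^{n_s} M`. -/
abbrev mixedSub (M : Type*) [AddCommGroup M] [Module A M] {s : ℕ} (J : Ideal A)
    (I : Fin s → Ideal A) (n : Fin (s + 1) → ℕ) : Submodule A M :=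
  (J ^ (n 0) * ∏ i : Fin s, I i ^ (n i.succ)) • (⊤ : Submodule A M)

/-- continued -/
abbrev mixedPiece (M : Type*) [AddCommGroup M] [Module A M] {s : ℕ} (J : Ideal A)
    (I : Fin s → Ideal A) (n : Fin (s + 1) → ℕ) :=
  ↥(mixedSub A M J I n) ⧸
    (Submodule.comap (mixedSub A M J I n).subtype
      ((J ^ (n 0 + 1) * ∏ i : Fin s, I i ^ (n i.succ)) • (⊤ : Submodule A M)))

/-- `e` is the mixed multiplicity `e_A(J^{[k_0+1]}, I_1^{[k_1]}, …, I_s^{[k_s]}; M)`: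
the function `(n_0, …, n_s) ↦ ℓ_A(J^{n_0} I_1^{n_1} ⋯ I_s^{n_s} M / J^{n_0+1} I_1^{n_1}
⋯ I_s^{n_s} M)` is, for all sufficiently large `n_0, …, n_s`, given by a polynomial of
total degree at most `k_0 + k_1 + ⋯ + k_s` whose coefficient of
`n_0^{k_0} n_1^{k_1} ⋯ n_s^{k_s}` is `e / (k_0! k_1! ⋯ k_s!)`. -/
def IsMixedMult (M : Type*) [AddCommGroup M] [Module A M] {s : ℕ} (J : Ideal A)
    (I : Fin s → Ideal A) (k0 : ℕ) (k : Fin s → ℕ) (e : ℕ) : Prop :=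
  ∃ P : MvPolynomial (Fin (s + 1)) ℚ, P.totalDegree ≤ k0 + ∑ i, k i ∧
    (∃ N : ℕ, ∀ n : Fin (s + 1) → ℕ, (∀ i, N ≤ n i) →
      IsFiniteLength A (mixedPiece A M J I n) ∧
      (lenNat A (mixedPiece A M J I n) : ℚ) =
        MvPolynomial.eval (fun i => (n i : ℚ)) P) ∧
    (e : ℚ) = MvPolynomial.coeff (Finsupp.equivFunOnFinite.symm (Fin.cons k0 k)) P *
      ((Nat.factorial k0 * ∏ i, Nat.factorial (k i) : ℕ) : ℚ)

/-- `e` is the mixed multiplicity `e_A(I_1^{[k_1]}, …, I_s^{[k_s]}; M)` of a family of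
`m`-primary ideals: the function `(n_1, …, n_s) ↦ ℓ_A(M / I_1^{n_1} ⋯ I_s^{n_s} M)` is, for
all sufficiently large `n_1, …, n_s`, given by a polynomial of total degree at most
`k_1 + ⋯ + k_s` whose coefficient of `n_1^{k_1} ⋯ n_s^{k_s}` is `e / (k_1! ⋯ k_s!)`. -/
def IsMixedMultPrimary (M : Type*) [AddCommGroup M] [Module A M] {s : ℕ}
    (I : Fin s → Ideal A) (k : Fin s → ℕ) (e : ℕ) : Prop :=
  ∃ P : MvPolynomial (Fin s) ℚ, P.totalDegree ≤ ∑ i, k i ∧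
    (∃ N : ℕ, ∀ n : Fin s → ℕ, (∀ i, N ≤ n i) →
      IsFiniteLength A (M ⧸ ((∏ i, I i ^ (n i)) • (⊤ : Submodule A M))) ∧
      (lenNat A (M ⧸ ((∏ i, I i ^ (n i)) • (⊤ : Submodule A M))) : ℚ) =
        MvPolynomial.eval (fun i => (n i : ℚ)) P) ∧
    (e : ℚ) = MvPolynomial.coeff (Finsupp.equivFunOnFinite.symm k) P *
      ((∏ i, Nat.factorial (k i) : ℕ) : ℚ)

/-- The submodule `(0_M : I^∞) = ⋃_n (0_M : I^n)` of `M`. -/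
def satSub (M : Type*) [AddCommGroup M] [Module A M] (I : Ideal A) : Submodule A M :=
  ⨆ n : ℕ, Submodule.torsionBySet A M ((I ^ n : Ideal A) : Set A)

/-- A polynomial function on an `A`-module `V` with values in the residue field of `A`:
an element of the subalgebra of functions generated by the linear ones. -/
def IsPolyFun [IsLocalRing A] (V : Type*) [AddCommGroup V] [Module A V]
    (f : V → ResidueField A) : Prop :=
  f ∈ Algebra.adjoin A {g : V → ResidueField A | ∃ l : V →ₗ[A] ResidueField A, g = ⇑l}

/-- A Zariski open subset of an `A`-module `V` (for `V` a finite-dimensional vector space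
over the residue field, this is the usual Zariski topology): the complement of the common
zero locus of a set of polynomial functions. -/
def IsZariskiOpen [IsLocalRing A] (V : Type*) [AddCommGroup V] [Module A V]
    (U : Set V) : Prop :=
  ∃ S : Set (V → ResidueField A), (∀ f ∈ S, IsPolyFun A V f) ∧
    U = {v | ∃ f ∈ S, f v ≠ 0}

end MixedMultDefs

/-!
Since `k` is infinite, finitely many proper submodules of `I_i` can be avoided by a condition on
`x + m I_i` that is non-empty and Zariski open; so it suffices that each of the two properties holds
off finitely many proper submodules. For `(a)` these are the `P ∩ I_i` with `P ∈ Σ`.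

For `(b)`, let `R = A[I_1 t_1, …, I_s t_s]`. The `R`-modules `G_j = ⨁ I^n M / I^(n + e_j) M` are
finite, and the submodules are the `{a ∈ I_i | a t_i ∈ P}` for the associated primes `P ⊉ I_i t_i`
of the `G_j`. Off these, the kernel of `x t_i` on `G_j` is killed by a power of `I_i t_i`, so by
Artin–Rees it vanishes in large `i`-degree. Hence if `x y ∈ I^(n + p + e_i) M` with `y ∈ I^n M` and
`n_i` is large, the exponent of `y` can be raised from `n` to `n + p` one unit vector at a time.
Artin–Rees for `x M` and the powers of `I_i` supplies the initial exponent, with `n_i` large.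
-/

open scoped TensorProduct

section ZariskiOpen

variable {A V : Type*} [CommRing A] [IsLocalRing A] [AddCommGroup V] [Module A V]

lemma exists_surjective_residueField_le_ker [Module.Finite A V] {W : Submodule A V}
    (hW : W ≠ ⊤) : ∃ l : V →ₗ[A] ResidueField A, Function.Surjective l ∧ W ≤ LinearMap.ker l := by
  obtain ⟨W', hW', hle⟩ := (eq_top_or_exists_le_coatom W).resolve_left hW
  have : IsSimpleModule A (V ⧸ W') := isSimpleModule_iff_isCoatom.mpr hW'
  obtain ⟨J, hJ, ⟨e⟩⟩ := isSimpleModule_iff_quot_maximal.mp this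
  obtain rfl := IsLocalRing.eq_maximalIdeal hJ
  have hker : LinearMap.ker (e.toLinearMap ∘ₗ W'.mkQ) = W' := by
    rw [LinearEquiv.ker_comp, Submodule.ker_mkQ]
  exact ⟨e.toLinearMap ∘ₗ W'.mkQ, e.surjective.comp W'.mkQ_surjective, hle.trans hker.ge⟩

lemma exists_forall_residueField_ne_zero [Infinite (ResidueField A)] {κ : Type*} [Finite κ]
    (l : κ → V →ₗ[A] ResidueField A) (hl : ∀ j, l j ≠ 0) : ∃ v, ∀ j, l j v ≠ 0 := by
  -- Pass to `k ⊗ V`, all of whose elements are of the form `1 ⊗ v`.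
  obtain ⟨z, hz⟩ := Module.Dual.exists_forall_ne_zero_of_forall_exists
    (fun j => (l j).liftBaseChange (ResidueField A)) fun j => by
      obtain ⟨v, hv⟩ := DFunLike.ne_iff.mp (hl j)
      exact ⟨1 ⊗ₜ v, by simpa using hv⟩
  obtain ⟨v, rfl⟩ := TensorProduct.mk_surjective A V (ResidueField A) residue_surjective z
  exact ⟨v, fun j => by simpa using hz j⟩

lemma isZariskiOpen_setOf_forall_ne_zero {κ : Type*} [Finite κ]
    (l : κ → V →ₗ[A] ResidueField A) : IsZariskiOpen A V {v | ∀ j, l j v ≠ 0} := by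
  have := Fintype.ofFinite κ
  refine ⟨{∏ j, ⇑(l j)}, ?_, ?_⟩
  · rintro _ rfl
    exact Subalgebra.prod_mem _ fun j _ => Algebra.subset_adjoin ⟨l j, rfl⟩
  · ext v
    simp [Finset.prod_ne_zero_iff]

lemma exists_isZariskiOpen_forall_notMem [Infinite (ResidueField A)] [Module.Finite A V]
    {𝒲 : Set (Submodule A V)} (hfin : 𝒲.Finite) (h𝒲 : ∀ W ∈ 𝒲, W ≠ ⊤) :
    ∃ U : Set V, IsZariskiOpen A V U ∧ U.Nonempty ∧ ∀ v ∈ U, ∀ W ∈ 𝒲, v ∉ W := by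
  have := hfin.to_subtype
  choose l hsurj hker using fun W : 𝒲 => exists_surjective_residueField_le_ker (h𝒲 W W.2)
  refine ⟨{v | ∀ W, l W v ≠ 0}, isZariskiOpen_setOf_forall_ne_zero l,
    exists_forall_residueField_ne_zero l fun W hW => ?_,
    fun v hv W hW hvW => hv ⟨W, hW⟩ (hker ⟨W, hW⟩ hvW)⟩
  obtain ⟨v, hv⟩ := hsurj W 1
  simp [hW] at hv

lemma exists_isZariskiOpen_quotient_forall_notMem [Infinite (ResidueField A)]
    [Module.Finite A V] {𝒲 : Set (Submodule A V)} (hfin : 𝒲.Finite) (h𝒲 : ∀ W ∈ 𝒲, W ≠ ⊤) :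
    ∃ U : Set (V ⧸ maximalIdeal A • (⊤ : Submodule A V)), IsZariskiOpen A _ U ∧ U.Nonempty ∧
      ∀ v : V, Submodule.Quotient.mk v ∈ U → ∀ W ∈ 𝒲, v ∉ W := by
  obtain ⟨U, hU, hne, hUW⟩ := exists_isZariskiOpen_forall_notMem
    (hfin.image (Submodule.map (Submodule.mkQ (maximalIdeal A • ⊤)))) <| by
      rintro _ ⟨W, hW, rfl⟩
      exact IsLocalRing.map_mkQ_eq_top.not.mpr (h𝒲 W hW)
  exact ⟨U, hU, hne, fun v hv W hW hvW =>
    hUW _ hv _ (Set.mem_image_of_mem _ hW) (Submodule.mem_map_of_mem hvW)⟩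

end ZariskiOpen

lemma exists_disjoint_pow_smul_top_torsionBy {R F : Type*} [CommRing R] [IsNoetherianRing R]
    [AddCommGroup F] [Module R F] [Module.Finite R F] (J : Ideal R) (t : R)
    (h : ∀ P ∈ associatedPrimes R F, t ∈ P → J ≤ P) :
    ∃ d : ℕ, Disjoint (J ^ d • (⊤ : Submodule R F)) (Submodule.torsionBy R F t) := by
  set K := Submodule.torsionBy R F t
  have ht : t ∈ K.annihilator :=
    (Module.isTorsionBy_iff_mem_annihilator R K).mp (Submodule.torsionBy_isTorsionBy t)
  have hJ : J ≤ K.annihilator.radical := by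
    rw [← Ideal.sInf_minimalPrimes]
    refine le_sInf fun P hP => h P ?_ (hP.1.2 ht)
    exact associatedPrimes.subset_of_injective K.injective_subtype
      (Module.associatedPrimes.minimalPrimes_annihilator_subset_associatedPrimes R K hP)
  obtain ⟨c, hc⟩ := Ideal.exists_pow_le_of_le_radical_of_fg hJ (IsNoetherian.noetherian J)
  obtain ⟨k, hk⟩ := J.exists_pow_inf_eq_pow_smul K
  refine ⟨k + c, disjoint_iff_inf_le.mpr ?_⟩
  calc J ^ (k + c) • ⊤ ⊓ K
      = J ^ c • (J ^ k • ⊤ ⊓ K) := by rw [hk _ (Nat.le_add_right k c), Nat.add_sub_cancel_left]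
    _ ≤ K.annihilator • K := Submodule.smul_mono hc inf_le_right
    _ = ⊥ := K.annihilator_smul

lemma induction_add_single_one {ι : Type*} {motive : (ι →₀ ℕ) → Prop} (n : ι →₀ ℕ)
    (zero : motive 0)
    (add_single_one : ∀ n j, motive n → motive (n + Finsupp.single j 1)) : motive n := by
  refine Finsupp.induction₂ n zero fun j c n _ _ hn => ?_
  clear * - hn add_single_one
  induction c with
  | zero => simpa using hn
  | succ c ih => simpa only [Finsupp.single_add, add_assoc] using add_single_one _ j ih

section PowerFiltration

variable {A ι : Type*} [CommRing A] (I : ι → Ideal A) (M : Type*) [AddCommGroup M] [Module A M]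

/-- The submodule `I^n M = (∏ j, I_j ^ n_j) M` for a multi-exponent `n`; finitely supported
exponents match the exponents of `MvPolynomial`. -/
noncomputable def powerFiltration (n : ι →₀ ℕ) : Submodule A M :=
  (n.prod fun j k => I j ^ k) • ⊤

lemma powerFiltration_zero : powerFiltration I M 0 = ⊤ := by
  simp [powerFiltration]

lemma powerFiltration_add (m n : ι →₀ ℕ) :
    powerFiltration I M (m + n) = (n.prod fun j k => I j ^ k) • powerFiltration I M m := by
  rw [powerFiltration, add_comm, Finsupp.prod_add_index' (by simp) (by simp [pow_add]),
    Submodule.mul_smul, powerFiltration]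

lemma powerFiltration_add_single (n : ι →₀ ℕ) (j : ι) (k : ℕ) :
    powerFiltration I M (n + Finsupp.single j k) = I j ^ k • powerFiltration I M n := by
  rw [powerFiltration_add, Finsupp.prod_single_index (h := fun j k => I j ^ k) (pow_zero _)]

lemma powerFiltration_single (j : ι) (k : ℕ) :
    powerFiltration I M (Finsupp.single j k) = I j ^ k • ⊤ := by
  rw [← zero_add (Finsupp.single j k), powerFiltration_add_single, powerFiltration_zero]

lemma powerFiltration_antitone : Antitone (powerFiltration I M) := by
  intro m n hmn
  rw [← add_tsub_cancel_of_le hmn, powerFiltration_add]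
  exact Submodule.smul_le_right

lemma prod_pow_smul_top_eq_powerFiltration [Fintype ι] (n : ι →₀ ℕ) :
    (∏ j, I j ^ n j) • (⊤ : Submodule A M) = powerFiltration I M n := by
  rw [powerFiltration, Finsupp.prod_pow]

/-- `x` cancels in the shift `p` from `i`-degree `d` on: multiplication by `x`, as an element of
`I_i`, is injective on the components of `⨁ I^n M / I^(n+p) M` of `i`-degree at least `d`. -/
def CancelsFrom (i : ι) (x : A) (p : ι →₀ ℕ) (d : ℕ) : Prop :=
  ∀ n : ι →₀ ℕ, d ≤ n i → ∀ y ∈ powerFiltration I M n,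
    x • y ∈ powerFiltration I M (n + p + Finsupp.single i 1) → y ∈ powerFiltration I M (n + p)

variable {I M} {i : ι} {x : A}

lemma CancelsFrom.mono {p : ι →₀ ℕ} {c d : ℕ} (h : CancelsFrom I M i x p c) (hcd : c ≤ d) :
    CancelsFrom I M i x p d :=
  fun n hn => h n (hcd.trans hn)

lemma CancelsFrom.of_single_one {d : ℕ}
    (h : ∀ j, CancelsFrom I M i x (Finsupp.single j 1) d) (p : ι →₀ ℕ) :
    CancelsFrom I M i x p d := by
  intro n hn y hy
  induction p using induction_add_single_one with
  | zero => exact fun _ => by rwa [add_zero]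
  | add_single_one p j ih =>
    intro hxy
    rw [← add_assoc] at hxy ⊢
    refine h j (n + p) (hn.trans (by simp)) y (ih ?_) hxy
    exact powerFiltration_antitone I M (add_le_add_left le_self_add _) hxy

end PowerFiltration

section ReesSuperficial

variable {A M : Type*} [CommRing A] [AddCommGroup M] [Module A M]

lemma span_singleton_smul_top_inf_pow_smul_top_le [IsNoetherianRing A] [Module.Finite A M]
    (J : Ideal A) (x : A) : ∃ c : ℕ, ∀ n ≥ c,
      Ideal.span {x} • (⊤ : Submodule A M) ⊓ J ^ n • ⊤ ≤ Ideal.span {x} • J ^ (n - c) • ⊤ := by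
  obtain ⟨c, hc⟩ := J.exists_pow_inf_eq_pow_smul (Ideal.span {x} • (⊤ : Submodule A M))
  refine ⟨c, fun n hn => ?_⟩
  rw [inf_comm, hc n hn, ← Submodule.mul_smul, mul_comm, Submodule.mul_smul]
  exact Submodule.smul_mono le_rfl inf_le_right

lemma isReesSuperficial_of_forall_cancelsFrom [IsNoetherianRing A] [Module.Finite A M] {s : ℕ}
    {I : Fin s → Ideal A} {i : Fin s} {x : A} (hx : x ∈ I i) {d : ℕ}
    (h : ∀ p, CancelsFrom I M i x p d) : IsReesSuperficial A M I i x := by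
  obtain ⟨c, hc⟩ := span_singleton_smul_top_inf_pow_smul_top_le (M := M) (I i) x
  refine ⟨hx, d + c, fun n hn => ?_⟩
  obtain ⟨n, rfl⟩ := Finsupp.equivFunOnFinite.surjective n
  have hsucc (j : Fin s) : n j + (if j = i then 1 else 0) =
      (n + Finsupp.single i 1 : Fin s →₀ ℕ) j := by
    simp [Finsupp.single_apply, eq_comm]
  simp only [Finsupp.equivFunOnFinite_apply, hsucc, prod_pow_smul_top_eq_powerFiltration] at hn ⊢
  have hle : Finsupp.single i (n i - c) ≤ n := Finsupp.single_le_iff.mpr (Nat.sub_le _ _)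
  refine le_antisymm (fun z hz => ?_) (le_inf (Submodule.smul_mono le_rfl le_top) ?_)
  · have hz' : z ∈ Ideal.span {x} • powerFiltration I M (Finsupp.single i (n i - c)) := by
      rw [powerFiltration_single]
      refine hc _ (by lia) ⟨hz.1, ?_⟩
      rw [← powerFiltration_single]
      refine powerFiltration_antitone I M ?_ hz.2
      simp [Finsupp.single_le_iff]
    rw [Submodule.ideal_span_singleton_smul, Submodule.mem_smul_pointwise_iff_exists] at hz' ⊢
    obtain ⟨y, hy, rfl⟩ := hz'
    have hdegree : d ≤ Finsupp.single i (n i - c) i := by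
      rw [Finsupp.single_eq_same]
      lia
    have hcancel := h (n - Finsupp.single i (n i - c)) _ hdegree y hy
    rw [add_tsub_cancel_of_le hle] at hcancel
    exact ⟨y, hcancel hz.2, rfl⟩
  · rw [powerFiltration_add_single, pow_one]
    exact Submodule.smul_mono_left ((Ideal.span_singleton_le_iff_mem _).mpr hx)

end ReesSuperficial

section MultiRees

variable {A ι : Type*} [CommRing A] (I : ι → Ideal A)

/-- The multi-Rees algebra `⨁ I^n t^n = A[I_j t_j | j ∈ ι]`, as a subalgebra of `A[t]`. -/
noncomputable def multiReesAlgebra : Subalgebra A (MvPolynomial ι A) :=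
  Algebra.adjoin A (⋃ j, Submodule.map (MvPolynomial.monomial (Finsupp.single j 1)) (I j))

instance multiReesAlgebra.isNoetherianRing [Finite ι] [IsNoetherianRing A] :
    IsNoetherianRing (multiReesAlgebra I) := by
  obtain ⟨g, hg⟩ := Submodule.fg_iSup
    (fun j => Submodule.map (MvPolynomial.monomial (Finsupp.single j 1)) (I j))
    fun j => (IsNoetherian.noetherian (I j)).map _
  have hFG : (multiReesAlgebra I).FG := by
    rw [multiReesAlgebra, ← Algebra.adjoin_span, ← Submodule.iSup_eq_span, ← hg,
      Algebra.adjoin_span]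
    exact Subalgebra.fg_adjoin_finset g
  have := (multiReesAlgebra I).fg_iff_finiteType.mp hFG
  exact Algebra.FiniteType.isNoetherianRing A _

namespace multiReesAlgebra

/-- The inclusion `a ↦ a t_j` of `I_j` as a graded piece of the multi-Rees algebra. -/
noncomputable def degreeOne (j : ι) : I j →ₗ[A] multiReesAlgebra I :=
  ((MvPolynomial.monomial (Finsupp.single j 1)).domRestrict (I j)).codRestrict
    (Subalgebra.toSubmodule (multiReesAlgebra I)) fun a =>
      Algebra.subset_adjoin (Set.mem_iUnion.mpr ⟨j, a, a.2, rfl⟩)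

/-- The ideal of the multi-Rees algebra generated by `I_j t_j`. -/
noncomputable def degreeOneIdeal (j : ι) : Ideal (multiReesAlgebra I) :=
  Ideal.span (Set.range (degreeOne I j))

lemma degreeOne_mem_degreeOneIdeal (j : ι) (a : I j) : degreeOne I j a ∈ degreeOneIdeal I j :=
  Ideal.subset_span ⟨a, rfl⟩

end multiReesAlgebra

end MultiRees

section AssociatedGraded

variable {A ι : Type*} [CommRing A] (I : ι → Ideal A) (M : Type*) [AddCommGroup M] [Module A M]

/-- The coefficient of `t^n` of an element of `M[t] = A[t] ⊗ M`. -/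
noncomputable def tensorCoeff (n : ι →₀ ℕ) : MvPolynomial ι A ⊗[A] M →ₗ[A] M :=
  (TensorProduct.lid A M).toLinearMap ∘ₗ (MvPolynomial.lcoeff A n).rTensor M

variable {M} in
lemma tensorCoeff_tmul (n : ι →₀ ℕ) (f : MvPolynomial ι A) (y : M) :
    tensorCoeff M n (f ⊗ₜ y) = f.coeff n • y := by
  simp [tensorCoeff]

variable {M} in
lemma tensorCoeff_monomial_smul (k n : ι →₀ ℕ) (a : A) (e : MvPolynomial ι A ⊗[A] M) :
    tensorCoeff M n (MvPolynomial.monomial k a • e) =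
      if k ≤ n then a • tensorCoeff M (n - k) e else 0 := by
  induction e using TensorProduct.induction_on with
  | zero => simp
  | add e f he hf => rw [smul_add, map_add, he, hf]; split_ifs <;> simp
  | tmul f y =>
    rw [TensorProduct.smul_tmul', tensorCoeff_tmul, tensorCoeff_tmul, smul_eq_mul,
      MvPolynomial.coeff_monomial_mul']
    split_ifs <;> simp [mul_smul]

/-- The submodule `⨁ I^(n+p) M t^n` of `M[t]`, over the multi-Rees algebra. -/
noncomputable def shiftedReesModule (p : ι →₀ ℕ) :
    Submodule (multiReesAlgebra I) (MvPolynomial ι A ⊗[A] M) where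
  carrier := {e | ∀ n, tensorCoeff M n e ∈ powerFiltration I M (n + p)}
  zero_mem' n := by simp
  add_mem' he hf n := by simpa using add_mem (he n) (hf n)
  smul_mem' := by
    rintro ⟨r, hr⟩ e he
    change ∀ n, tensorCoeff M n (r • e) ∈ powerFiltration I M (n + p)
    induction hr using Algebra.adjoin_induction generalizing e with
    | mem r hr =>
      obtain ⟨j, a, ha, rfl⟩ := Set.mem_iUnion.mp hr
      intro n
      rw [tensorCoeff_monomial_smul]
      split_ifs with hjn
      · rw [← tsub_add_cancel_of_le hjn, add_right_comm, powerFiltration_add_single, pow_one,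
          tsub_add_cancel_of_le hjn]
        exact Submodule.smul_mem_smul ha (he _)
      · exact zero_mem _
    | algebraMap a =>
      intro n
      rw [algebraMap_smul, map_smul]
      exact Submodule.smul_mem _ a (he n)
    | add r q _ _ hr hq =>
      intro n
      rw [add_smul, map_add]
      exact add_mem (hr he n) (hq he n)
    | mul r q _ _ hr hq =>
      intro n
      rw [mul_smul]
      exact hr (hq he) n

/-- The quotient `M[t] / ⨁ I^(n+p) M t^n`, in which `⨁ I^n M / I^(n+p) M` sits. Deliberately not
reducible: instance search through the tensor product is too slow. -/
def ShiftedQuotient (p : ι →₀ ℕ) : Type _ :=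
  (MvPolynomial ι A ⊗[A] M) ⧸ shiftedReesModule I M p

noncomputable instance (p : ι →₀ ℕ) : AddCommGroup (ShiftedQuotient I M p) :=
  Submodule.Quotient.addCommGroup _

noncomputable instance (p : ι →₀ ℕ) : Module (multiReesAlgebra I) (ShiftedQuotient I M p) :=
  Submodule.Quotient.module _

noncomputable instance (p : ι →₀ ℕ) : Module A (ShiftedQuotient I M p) :=
  Submodule.Quotient.module' _

instance (p : ι →₀ ℕ) : IsScalarTower A (multiReesAlgebra I) (ShiftedQuotient I M p) :=
  Submodule.Quotient.isScalarTower _ _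

/-- The class of `y t^n` in `M[t] / ⨁ I^(n+p) M t^n`. -/
noncomputable def shiftedClass (p n : ι →₀ ℕ) :
    M →ₗ[A] ShiftedQuotient I M p :=
  (shiftedReesModule I M p).mkQ.restrictScalars A ∘ₗ
    TensorProduct.mk A _ M (MvPolynomial.monomial n 1)

variable {M}

lemma shiftedClass_eq_zero_iff (p n : ι →₀ ℕ) (y : M) :
    shiftedClass I M p n y = 0 ↔ y ∈ powerFiltration I M (n + p) := by
  classical
  refine (Submodule.Quotient.mk_eq_zero _).trans ⟨fun h => ?_, fun h k => ?_⟩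
  · simpa [tensorCoeff_tmul] using h n
  · rw [TensorProduct.mk_apply, tensorCoeff_tmul, MvPolynomial.coeff_monomial]
    split_ifs with hnk
    · rwa [one_smul, ← hnk]
    · rw [zero_smul]
      exact zero_mem _

lemma degreeOne_smul_shiftedClass (p n : ι →₀ ℕ) {j : ι} (a : I j) (y : M) :
    multiReesAlgebra.degreeOne I j a • shiftedClass I M p n y =
      shiftedClass I M p (n + Finsupp.single j 1) ((a : A) • y) := by
  refine congrArg (shiftedReesModule I M p).mkQ ?_
  change MvPolynomial.monomial (Finsupp.single j 1) (a : A) •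
      MvPolynomial.monomial n (1 : A) ⊗ₜ[A] y =
    MvPolynomial.monomial (n + Finsupp.single j 1) 1 ⊗ₜ ((a : A) • y)
  rw [TensorProduct.smul_tmul', ← TensorProduct.smul_tmul, smul_eq_mul,
    MvPolynomial.monomial_mul, MvPolynomial.smul_monomial, add_comm, smul_eq_mul]

variable (M)

/-- The module `⨁ I^n M / I^(n+p) M` over the multi-Rees algebra, realised as the submodule of
`M[t] / ⨁ I^(n+p) M t^n` generated by the classes of the elements of `M`. -/
noncomputable def shiftedGraded (p : ι →₀ ℕ) :
    Submodule (multiReesAlgebra I) (ShiftedQuotient I M p) :=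
  LinearMap.range ((shiftedClass I M p 0).liftBaseChange (multiReesAlgebra I))

instance shiftedGraded.finite [Module.Finite A M] (p : ι →₀ ℕ) :
    Module.Finite (multiReesAlgebra I) (shiftedGraded I M p) :=
  Module.Finite.range _

variable {M}

lemma shiftedClass_mem_pow_smul_shiftedGraded (i : ι) (p n : ι →₀ ℕ) {y : M}
    (hy : y ∈ powerFiltration I M n) :
    shiftedClass I M p n y ∈
      multiReesAlgebra.degreeOneIdeal I i ^ n i • shiftedGraded I M p := by
  induction n using induction_add_single_one generalizing y with
  | zero =>
    rw [Finsupp.zero_apply, pow_zero, one_smul]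
    exact ⟨1 ⊗ₜ y, by simp⟩
  | add_single_one n j ih =>
    rw [powerFiltration_add_single, pow_one] at hy
    induction hy using Submodule.smul_induction_on' with
    | add y _ z _ hy hz => rw [map_add]; exact add_mem hy hz
    | smul a ha y hy =>
      rw [← degreeOne_smul_shiftedClass I p n ⟨a, ha⟩]
      obtain rfl | hij := eq_or_ne j i
      · rw [Finsupp.add_apply, Finsupp.single_eq_same, pow_succ', Submodule.mul_smul]
        exact Submodule.smul_mem_smul
          (multiReesAlgebra.degreeOne_mem_degreeOneIdeal I j ⟨a, ha⟩) (ih hy)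
      · rw [Finsupp.add_apply, Finsupp.single_eq_of_ne hij.symm, add_zero]
        exact Submodule.smul_mem _ _ (ih hy)

lemma exists_cancelsFrom [Finite ι] [IsNoetherianRing A] [Module.Finite A M] {i : ι} (x : I i)
    (p : ι →₀ ℕ)
    (h : ∀ P ∈ associatedPrimes (multiReesAlgebra I) (shiftedGraded I M p),
      multiReesAlgebra.degreeOne I i x ∈ P → multiReesAlgebra.degreeOneIdeal I i ≤ P) :
    ∃ d, CancelsFrom I M i x p d := by
  obtain ⟨d, hd⟩ := exists_disjoint_pow_smul_top_torsionBy (F := shiftedGraded I M p) _ _ h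
  refine ⟨d, fun n hn y hy hxy => ?_⟩
  have hmem : shiftedClass I M p n y ∈ Submodule.map (shiftedGraded I M p).subtype
      (multiReesAlgebra.degreeOneIdeal I i ^ d • ⊤) := by
    rw [Submodule.map_smul'', Submodule.map_subtype_top]
    exact Submodule.smul_mono_left (Ideal.pow_le_pow_right hn)
      (shiftedClass_mem_pow_smul_shiftedGraded I i p n hy)
  obtain ⟨f, hf, hfy⟩ := hmem
  have htorsion : f ∈ Submodule.torsionBy _ _ (multiReesAlgebra.degreeOne I i x) := by
    rw [Submodule.mem_torsionBy_iff, ← Submodule.coe_eq_zero]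
    change multiReesAlgebra.degreeOne I i x • (shiftedGraded I M p).subtype f = 0
    rwa [hfy, degreeOne_smul_shiftedClass, shiftedClass_eq_zero_iff, add_right_comm]
  have hf0 : f = 0 := Submodule.disjoint_def.mp hd f hf htorsion
  rw [← shiftedClass_eq_zero_iff, ← hfy, hf0, map_zero]

end AssociatedGraded

section BadSubmodules

variable {A M : Type*} [CommRing A] [IsNoetherianRing A] [AddCommGroup M] [Module A M]
  [Module.Finite A M]

lemma exists_finite_forall_notMem_cancelsFrom {ι : Type*} [Finite ι] (I : ι → Ideal A) (i : ι)
    (p : ι →₀ ℕ) :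
    ∃ 𝒲 : Set (Submodule A (I i)), 𝒲.Finite ∧ (∀ W ∈ 𝒲, W ≠ ⊤) ∧
      ∀ x : I i, (∀ W ∈ 𝒲, x ∉ W) → ∃ d, CancelsFrom I M i x p d := by
  let pullback (P : Ideal (multiReesAlgebra I)) : Submodule A (I i) :=
    (P.restrictScalars A).comap (multiReesAlgebra.degreeOne I i)
  refine ⟨pullback '' {P ∈ associatedPrimes (multiReesAlgebra I) (shiftedGraded I M p) |
    ¬ multiReesAlgebra.degreeOneIdeal I i ≤ P}, ?_, ?_, fun x hx => ?_⟩
  · have hfin := associatedPrimes.finite (multiReesAlgebra I) (shiftedGraded I M p)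
    exact (hfin.subset (Set.sep_subset _ _)).image _
  · rintro _ ⟨P, ⟨-, hP⟩, rfl⟩ htop
    refine hP (Ideal.span_le.mpr ?_)
    rintro _ ⟨a, rfl⟩
    exact (htop ▸ Submodule.mem_top : a ∈ pullback P)
  · refine exists_cancelsFrom I x p fun P hP hxP => ?_
    by_contra hJP
    exact hx _ ⟨P, ⟨hP, hJP⟩, rfl⟩ hxP

lemma exists_finite_forall_notMem_isReesSuperficial {s : ℕ} (I : Fin s → Ideal A) (i : Fin s) :
    ∃ 𝒲 : Set (Submodule A (I i)), 𝒲.Finite ∧ (∀ W ∈ 𝒲, W ≠ ⊤) ∧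
      ∀ x : I i, (∀ W ∈ 𝒲, x ∉ W) → IsReesSuperficial A M I i x := by
  choose 𝒲 hfin hne hcancel using fun j =>
    exists_finite_forall_notMem_cancelsFrom (M := M) I i (Finsupp.single j 1)
  refine ⟨⋃ j, 𝒲 j, Set.finite_iUnion hfin, by simpa using fun W j => hne j W, fun x hx => ?_⟩
  choose d hd using fun j => hcancel j x fun W hW => hx W (Set.mem_iUnion_of_mem j hW)
  exact isReesSuperficial_of_forall_cancelsFrom x.2 <| CancelsFrom.of_single_one fun j =>
    (hd j).mono (Finset.le_sup (Finset.mem_univ j))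

end BadSubmodules

theorem exists_zariskiOpen_reesSuperficial_general
    (A : Type*) [CommRing A] [IsNoetherianRing A] [IsLocalRing A]
    [Infinite (ResidueField A)]
    (M : Type*) [AddCommGroup M] [Module A M] [Module.Finite A M]
    {s : ℕ} (I : Fin s → Ideal A)
    (Sig : Finset (Ideal A)) (i : Fin s) (hi : ∀ P ∈ Sig, ¬ I i ≤ P) :
    ∃ U : Set (↥(I i) ⧸ ((maximalIdeal A) • (⊤ : Submodule A ↥(I i)))),
      IsZariskiOpen A _ U ∧ U.Nonempty ∧
      ∀ (x : A) (hx : x ∈ I i),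
        Submodule.Quotient.mk (⟨x, hx⟩ : I i) ∈ U →
          (∀ P ∈ Sig, x ∉ P) ∧ IsReesSuperficial A M I i x := by
  obtain ⟨𝒲, hfin, h𝒲, hsuperficial⟩ :=
    exists_finite_forall_notMem_isReesSuperficial (M := M) I i
  have hSig : ∀ W ∈ Submodule.comap (I i).subtype '' (Sig : Set (Ideal A)), W ≠ ⊤ := by
    rintro _ ⟨P, hP, rfl⟩
    rw [Ne, Submodule.comap_subtype_eq_top]
    exact hi P hP
  obtain ⟨U, hU, hne, hUW⟩ := exists_isZariskiOpen_quotient_forall_notMem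
    ((Sig.finite_toSet.image _).union hfin) fun W hW => hW.elim (hSig W) (h𝒲 W)
  exact ⟨U, hU, hne, fun x hx hxU =>
    ⟨fun P hP hxP => hUW _ hxU _ (Or.inl ⟨P, hP, rfl⟩) hxP,
      hsuperficial ⟨x, hx⟩ fun W hW => hUW _ hxU W (Or.inr hW)⟩⟩

/-- cf. Rees, Lemma 1.2.  If `I i` is contained in no prime of the finite
set `Σ`, then there is a non-empty Zariski open subset `U` of `I i / m I i` such that any
`x ∈ I i` whose image lies in `U` avoids all primes of `Σ` and is a Rees superficial
element of `(I 1, …, I s)` with respect to `M`. -/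
theorem exists_zariskiOpen_reesSuperficial
    (A : Type*) [CommRing A] [IsNoetherianRing A] [IsLocalRing A]
    [Infinite (ResidueField A)]
    (M : Type*) [AddCommGroup M] [Module A M] [Module.Finite A M]
    {s : ℕ} (I : Fin s → Ideal A)
    (Sig : Finset (Ideal A)) (hSig : ∀ P ∈ Sig, P.IsPrime)
    (i : Fin s) (hi : ∀ P ∈ Sig, ¬ I i ≤ P) :
    ∃ U : Set (↥(I i) ⧸ ((maximalIdeal A) • (⊤ : Submodule A ↥(I i)))),
      IsZariskiOpen A _ U ∧ U.Nonempty ∧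
      ∀ (x : A) (hx : x ∈ I i),
        Submodule.Quotient.mk (⟨x, hx⟩ : I i) ∈ U →
          (∀ P ∈ Sig, x ∉ P) ∧ IsReesSuperficial A M I i x :=
  exists_zariskiOpen_reesSuperficial_general A M I Sig i hi
end

section
/- Let (A, m) be a noetherian local ring with maximal ideal m and infinite residue field k = A/m, let I_1, ..., I_s be ideals of A, and let M be a finitely generated A-module. Assume I = I_1···I_s is not contained in √(Ann_A M). Then for any 1 ≤ i ≤ s there exists a non-empty Zariski open subset U of the k-vector space I_i/mI_i such that every x ∈ I_i whose image x + mI_i lies in U is a weak-(FC)-element of (I_1, ..., I_s) with respect to M. -/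
open IsLocalRing

/-!
Let `R` be the multigraded extended Rees algebra of the family `I`, `N` the extended Rees module of
`M`, and `u = t₁⁻¹ ⋯ tₛ⁻¹ ∈ R`. Since `R` is noetherian and `N` is finitely generated, `N / uN` has
finitely many associated primes, and so has `M`. A general `x ∈ Iᵢ` is such that `x tᵢ` (resp. `x`)
lies in one of these primes only if all of `Iᵢ tᵢ` (resp. `Iᵢ`) does: one has to avoid finitely many
proper subspaces of `Iᵢ / m Iᵢ`, and the residue field is infinite.

Put `a = x tᵢ`. If `x m ∈ I₁^{n₁} ⋯ Iᵢ^{nᵢ+1} ⋯ Iₛ^{nₛ} M`, then `x m t^{n + eᵢ}` lies in the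
saturation `T = ⋃ₖ (a N : u ^ k)`. By the choice of `x` on `Ass (N / uN)`, a power `(Iᵢ tᵢ) ^ c`
maps `T` into `a N`. As `T` is finitely generated, in large `tᵢ`-degree it coincides with
`(Iᵢ tᵢ) ^ c T`, so `x m t^{n + eᵢ} ∈ a N`, which is superficiality. Similarly, the choice of `x` on
`Ass M` shows that a power of `Iᵢ` kills `(0 : x)`.
-/

section AssociatedPrimes

open Module
open scoped Pointwise

variable {R N : Type*} [CommRing R] [AddCommGroup N] [Module R N]

theorem exists_torsionBy_le_torsionBySet_pow [IsNoetherianRing R] [Module.Finite R N] {J : Ideal R}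
    {a : R} (ha : ∀ P ∈ associatedPrimes R N, a ∈ P → J ≤ P) :
    ∃ c : ℕ, Submodule.torsionBy R N a ≤ Submodule.torsionBySet R N (J ^ c : Ideal R) := by
  set K := Submodule.torsionBy R N a
  have hJ : J ≤ (annihilator R K).radical := by
    rw [← Ideal.sInf_minimalPrimes]
    refine le_sInf fun P hP ↦ ha P ?_ (hP.1.2 ?_)
    · exact associatedPrimes.subset_of_injective K.subtype_injective
        (associatedPrimes.minimalPrimes_annihilator_subset_associatedPrimes R K hP)
    · exact mem_annihilator.2 fun z ↦ Subtype.ext z.2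
  obtain ⟨c, hc⟩ := Ideal.exists_pow_le_of_le_radical_of_fg hJ (IsNoetherian.noetherian J)
  refine ⟨c, fun z hz ↦ (Submodule.mem_torsionBySet_iff _ _).2 fun b ↦ ?_⟩
  exact congrArg Subtype.val (mem_annihilator.1 (hc b.2) ⟨z, hz⟩)

theorem associatedPrimes_quotSMulTop_mul_subset {a : R} (ha : IsSMulRegular N a) (b : R) :
    associatedPrimes R (QuotSMulTop (a * b) N) ⊆
      associatedPrimes R (QuotSMulTop b N) ∪ associatedPrimes R (QuotSMulTop a N) := by
  have hmap : (b • ⊤ : Submodule R N) =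
      ((a * b) • ⊤ : Submodule R N).comap (LinearMap.lsmul R N a) := by
    rw [mul_smul]
    exact (Submodule.comap_map_eq_of_injective (f := LinearMap.lsmul R N a) ha _).symm
  have hle : ((a * b) • ⊤ : Submodule R N) ≤ a • ⊤ := by
    rw [mul_smul]
    exact smul_mono_right a le_top
  let f : QuotSMulTop b N →ₗ[R] QuotSMulTop (a * b) N := Submodule.mapQ _ _ _ hmap.le
  let g : QuotSMulTop (a * b) N →ₗ[R] QuotSMulTop a N := Submodule.factor hle
  have hf : Function.Injective f := by
    rw [← LinearMap.ker_eq_bot, Submodule.ker_mapQ, ← hmap, Submodule.mkQ_map_self]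
  have hfg : Function.Exact f g := by
    rw [LinearMap.exact_iff, Submodule.ker_mapQ, Submodule.comap_id, Submodule.range_mapQ,
      LinearMap.range_eq_map]
    rfl
  exact associatedPrimes.subset_union_of_exact hf hfg

theorem associatedPrimes_quotSMulTop_pow_subset {u : R} (hu : IsSMulRegular N u) (k : ℕ) :
    associatedPrimes R (QuotSMulTop (u ^ k) N) ⊆ associatedPrimes R (QuotSMulTop u N) := by
  induction k with
  | zero =>
    have : Subsingleton (QuotSMulTop (u ^ 0) N) := by simp
    simp [associatedPrimes.eq_empty_of_subsingleton]
  | succ k ih =>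
    rw [pow_succ']
    exact (associatedPrimes_quotSMulTop_mul_subset hu _).trans (Set.union_subset ih subset_rfl)

variable (N) in
/-- The submodule `⋃ₖ (a N : u ^ k)` of `N`, which is the part of `N` that becomes divisible by `a`
in the localization of `N` at `u`. -/
def smulTopSaturation (u a : R) : Submodule R N :=
  (Submodule.torsion' R (QuotSMulTop a N) (Submonoid.powers u)).comap (Submodule.mkQ _)

theorem mem_smulTopSaturation {u a : R} {y : N} :
    y ∈ smulTopSaturation N u a ↔ ∃ k : ℕ, ∃ z : N, a • z = u ^ k • y := by
  simp only [smulTopSaturation, Submodule.mem_comap, Submodule.mem_torsion'_iff, Subtype.exists,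
    Submonoid.mem_powers_iff, Submonoid.mk_smul, exists_prop, exists_exists_eq_and,
    Submodule.mkQ_apply, ← Submodule.Quotient.mk_smul, Submodule.Quotient.mk_eq_zero,
    Submodule.mem_smul_pointwise_iff_exists, Submodule.mem_top, true_and]

theorem exists_forall_mem_smulTopSaturation_exists_smul_eq [IsNoetherian R N] (u a : R) :
    ∃ k : ℕ, ∀ y ∈ smulTopSaturation N u a, ∃ z : N, a • z = u ^ k • y := by
  let T : ℕ →o Submodule R N :=
    ⟨fun k ↦ (LinearMap.range (LinearMap.lsmul R N a)).comap (LinearMap.lsmul R N (u ^ k)),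
      monotone_nat_of_le_succ fun k y hy ↦ by
        simpa [pow_succ', mul_smul] using Submodule.smul_mem _ u hy⟩
  obtain ⟨k, hk⟩ := monotone_stabilizes_iff_noetherian.2 ‹_› T
  refine ⟨k, fun y hy ↦ ?_⟩
  obtain ⟨l, hl⟩ := mem_smulTopSaturation.1 hy
  have hy' : y ∈ T (max k l) := T.monotone (le_max_right k l) hl
  rwa [← hk _ (le_max_left k l)] at hy'

theorem exists_forall_mem_pow_smul_smulTopSaturation_exists_smul_eq [IsNoetherianRing R]
    [Module.Finite R N] {J : Ideal R} {a u : R} (hu : IsSMulRegular N u)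
    (ha : ∀ P ∈ associatedPrimes R (QuotSMulTop u N), a ∈ P → J ≤ P) :
    ∃ c : ℕ, ∀ y ∈ J ^ c • smulTopSaturation N u a, ∃ w : N, a • w = y := by
  obtain ⟨k, hk⟩ := exists_forall_mem_smulTopSaturation_exists_smul_eq (N := N) u a
  obtain ⟨c, hc⟩ := exists_torsionBy_le_torsionBySet_pow (N := QuotSMulTop (u ^ k) N) fun P hP ↦
    ha P (associatedPrimes_quotSMulTop_pow_subset hu k hP)
  suffices h : J ^ c • smulTopSaturation N u a ≤ LinearMap.range (LinearMap.lsmul R N a) from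
    ⟨c, fun y hy ↦ h hy⟩
  refine Submodule.smul_le.2 fun b hb y hy ↦ ?_
  obtain ⟨z, hz⟩ := hk y hy
  have hza : a • (Submodule.Quotient.mk z : QuotSMulTop (u ^ k) N) = 0 := by
    rw [← Submodule.Quotient.mk_smul, hz]
    exact (Submodule.Quotient.mk_eq_zero _).2 (Submodule.smul_mem_pointwise_smul _ _ _ trivial)
  have hzb : b • (Submodule.Quotient.mk z : QuotSMulTop (u ^ k) N) = 0 :=
    (Submodule.mem_torsionBySet_iff _ _).1 (hc hza) ⟨b, hb⟩
  obtain ⟨w, -, hw : u ^ k • w = b • z⟩ := (Submodule.Quotient.mk_eq_zero _).1 hzb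
  refine ⟨w, hu.pow k ?_⟩
  calc u ^ k • a • w = a • u ^ k • w := smul_comm ..
    _ = b • a • z := by rw [hw, smul_comm]
    _ = u ^ k • b • y := by rw [hz, smul_comm]

end AssociatedPrimes

section ZariskiOpen

variable {A V : Type*} [CommRing A] [IsLocalRing A] [AddCommGroup V] [Module A V]

theorem IsPolyFun.of_linearMap (l : V →ₗ[A] ResidueField A) : IsPolyFun A V l :=
  Algebra.subset_adjoin ⟨l, rfl⟩

theorem IsPolyFun.prod {ι : Type*} (t : Finset ι) {f : ι → V → ResidueField A}
    (hf : ∀ j ∈ t, IsPolyFun A V (f j)) : IsPolyFun A V (∏ j ∈ t, f j) :=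
  Subalgebra.prod_mem _ hf

theorem IsPolyFun.isZariskiOpen {f : V → ResidueField A} (hf : IsPolyFun A V f) :
    IsZariskiOpen A V {v | f v ≠ 0} :=
  ⟨{f}, by simpa using hf, by simp⟩

theorem exists_forall_linearMap_ne_zero [Infinite (ResidueField A)] {ι : Type*} (t : Finset ι)
    {l : ι → V →ₗ[A] ResidueField A} (hl : ∀ j ∈ t, l j ≠ 0) : ∃ v, ∀ j ∈ t, l j v ≠ 0 := by
  by_contra! hcover
  obtain ⟨j, hj, hfin⟩ := Submodule.exists_finiteIndex_of_cover (R := A)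
    (p := fun j ↦ LinearMap.ker (l j)) (s := t) <| by
      ext v
      simpa using hcover v
  have : IsSimpleModule A (ResidueField A) :=
    isSimpleModule_iff_isCoatom.2 (maximalIdeal.isMaximal A).out
  have hsurj : Function.Surjective (l j) := LinearMap.surjective_of_ne_zero (hl j hj)
  have : Finite (V ⧸ LinearMap.ker (l j)) :=
    inferInstanceAs (Finite (V ⧸ (LinearMap.ker (l j)).toAddSubgroup))
  have := Finite.of_equiv _ ((l j).quotKerEquivOfSurjective hsurj).toEquiv
  exact not_finite (ResidueField A)

theorem exists_linearMap_residueField_le_ker [Module.Finite A V] {H : Submodule A V}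
    (hH : H ≠ ⊤) : ∃ l : V →ₗ[A] ResidueField A, l ≠ 0 ∧ H ≤ LinearMap.ker l := by
  obtain ⟨H', hH', hle⟩ := (eq_top_or_exists_le_coatom H).resolve_left hH
  have : IsSimpleModule A (V ⧸ H') := isSimpleModule_iff_isCoatom.2 hH'
  obtain ⟨m, hm, ⟨e⟩⟩ := isSimpleModule_iff_quot_maximal.1 this
  obtain rfl := IsLocalRing.eq_maximalIdeal hm
  let l : V →ₗ[A] ResidueField A := e.toLinearMap ∘ₗ H'.mkQ
  have hker : LinearMap.ker l = H' :=
    (LinearEquiv.ker_comp e H'.mkQ).trans H'.ker_mkQ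
  refine ⟨l, fun h0 ↦ hH'.1 ?_, hle.trans hker.ge⟩
  rw [← hker, h0, LinearMap.ker_zero]

theorem maximalIdeal_smul_top_le_ker (l : V →ₗ[A] ResidueField A) :
    maximalIdeal A • (⊤ : Submodule A V) ≤ LinearMap.ker l := by
  refine Submodule.smul_le.2 fun r hr v _ ↦ ?_
  rw [LinearMap.mem_ker, map_smul, Algebra.smul_def, ResidueField.algebraMap_eq,
    (residue_eq_zero_iff r).2 hr, zero_mul]

theorem exists_isZariskiOpen_forall_mem_imp_eq_top [Infinite (ResidueField A)] [Module.Finite A V]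
    {S : Set (Submodule A V)} (hS : S.Finite) :
    ∃ U : Set (V ⧸ maximalIdeal A • (⊤ : Submodule A V)), IsZariskiOpen A _ U ∧ U.Nonempty ∧
      ∀ v : V, Submodule.Quotient.mk v ∈ U → ∀ H ∈ S, v ∈ H → H = ⊤ := by
  choose! l hl0 hl using fun (H : Submodule A V) (hH : H ≠ ⊤) ↦
    exists_linearMap_residueField_le_ker hH
  set t : Finset (Submodule A V) := (hS.sdiff (t := {⊤})).toFinset with ht
  let lbar (H : Submodule A V) : (V ⧸ maximalIdeal A • (⊤ : Submodule A V)) →ₗ[A] ResidueField A :=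
    Submodule.liftQ _ (l H) (maximalIdeal_smul_top_le_ker (l H))
  have hlbar (v : V) : (∏ H ∈ t, ⇑(lbar H)) (Submodule.Quotient.mk v) ≠ 0 ↔
      ∀ H ∈ t, l H v ≠ 0 := by
    simp [Finset.prod_ne_zero_iff, lbar]
  obtain ⟨v, hv⟩ := exists_forall_linearMap_ne_zero t (l := l) fun H hH ↦ hl0 H (by simp_all)
  refine ⟨_, (IsPolyFun.prod t fun H _ ↦ .of_linearMap (lbar H)).isZariskiOpen,
    ⟨Submodule.Quotient.mk v, (hlbar v).2 hv⟩, fun v hvU H hH hvH ↦ ?_⟩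
  by_contra hne
  exact (hlbar v).1 hvU H (by simp [ht, hH, hne]) (hl H hne hvH)

end ZariskiOpen

section ExtendedReesAlgebra

open AddMonoidAlgebra

variable {A ι : Type*} [CommRing A]

/-- The coefficient ideal of `t ^ n`: all `a : A` such that `a t ^ n` lies in `S`. -/
noncomputable def coeffIdeal (S : Submodule A A[ι → ℤ]) (n : ι → ℤ) : Ideal A :=
  S.comap (lsingle n)

theorem mem_coeffIdeal {S : Submodule A A[ι → ℤ]} {n : ι → ℤ} {a : A} :
    a ∈ coeffIdeal S n ↔ single n a ∈ S :=
  Iff.rfl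

section Subalgebra

variable (S : Subalgebra A A[ι → ℤ])

theorem coeffIdeal_zero : coeffIdeal S.toSubmodule 0 = ⊤ :=
  (Ideal.eq_top_iff_one _).2 S.one_mem

theorem coeffIdeal_mul_le (n m : ι → ℤ) :
    coeffIdeal S.toSubmodule n * coeffIdeal S.toSubmodule m ≤ coeffIdeal S.toSubmodule (n + m) :=
  Ideal.mul_le.2 fun a ha b hb ↦ by
    rw [mem_coeffIdeal, ← single_mul_single]
    exact S.mul_mem ha hb

theorem coeffIdeal_pow_le (n : ι → ℤ) (k : ℕ) :
    coeffIdeal S.toSubmodule n ^ k ≤ coeffIdeal S.toSubmodule (k • n) := by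
  induction k with
  | zero => simp [coeffIdeal_zero]
  | succ k ih =>
    rw [pow_succ, succ_nsmul]
    exact (Ideal.mul_mono_left ih).trans (coeffIdeal_mul_le S _ _)

theorem prod_coeffIdeal_le {κ : Type*} (t : Finset κ) (n : κ → ι → ℤ) :
    ∏ j ∈ t, coeffIdeal S.toSubmodule (n j) ≤ coeffIdeal S.toSubmodule (∑ j ∈ t, n j) := by
  induction t using Finset.cons_induction with
  | empty => simp [coeffIdeal_zero]
  | cons j t hj ih =>
    rw [Finset.prod_cons, Finset.sum_cons]
    exact (Ideal.mul_mono_right ih).trans (coeffIdeal_mul_le S _ _)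

end Subalgebra

variable [Fintype ι] (I : ι → Ideal A)

/-- The product `∏ j, I j ^ n j` for an integral multi-index `n`, with `I j ^ n j = A` whenever
`n j ≤ 0`. -/
def multiPow (n : ι → ℤ) : Ideal A :=
  ∏ j, I j ^ (n j).toNat

theorem multiPow_natCast (n : ι → ℕ) : multiPow I (fun j ↦ n j) = ∏ j, I j ^ n j := by
  simp [multiPow]

theorem multiPow_of_nonpos {n : ι → ℤ} (hn : n ≤ 0) : multiPow I n = ⊤ := by
  rw [← Ideal.one_eq_top]
  exact Finset.prod_eq_one fun j _ ↦ by rw [Int.toNat_of_nonpos (hn j), pow_zero]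

theorem multiPow_mul_le (n m : ι → ℤ) : multiPow I n * multiPow I m ≤ multiPow I (n + m) := by
  rw [multiPow, multiPow, ← Finset.prod_mul_distrib]
  refine Finset.prod_le_prod' fun j _ ↦ ?_
  rw [← pow_add]
  exact Ideal.pow_le_pow_right (by rw [Pi.add_apply]; omega)

section DecidableEq

variable [DecidableEq ι]

theorem multiPow_single (i : ι) (z : ℤ) : multiPow I (Pi.single i z) = I i ^ z.toNat := by
  rw [multiPow, Finset.prod_eq_single i (fun j _ hj ↦ by simp [hj]) (by simp), Pi.single_eq_same]

theorem multiPow_single_one (i : ι) : multiPow I (Pi.single i 1) = I i := by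
  simp [multiPow_single]

theorem multiPow_eq_mul {i : ι} {n : ι → ℤ} (hn : 0 < n i) :
    multiPow I n = I i * multiPow I (n - Pi.single i 1) := by
  have hprod (m : ι → ℤ) := Finset.mul_prod_erase Finset.univ (fun j ↦ I j ^ (m j).toNat)
    (Finset.mem_univ i)
  rw [multiPow, multiPow, ← hprod n, ← hprod, ← mul_assoc, ← pow_succ']
  congr 1
  · rw [Pi.sub_apply, Pi.single_eq_same, show (n i).toNat = (n i - 1).toNat + 1 by omega]
  · exact Finset.prod_congr rfl fun j hj ↦ by simp [Finset.ne_of_mem_erase hj]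

end DecidableEq

/-- The multigraded extended Rees algebra `⨁ₙ I₁^{n₁} ⋯ Iₛ^{nₛ} t ^ n` of the family `I`, where `n`
ranges over all of `ι → ℤ`, as a subalgebra of the Laurent polynomial ring `A[ι → ℤ]`. -/
def extendedReesAlgebra : Subalgebra A A[ι → ℤ] where
  carrier := {f | ∀ n, f.coeff n ∈ multiPow I n}
  add_mem' hf hg n := add_mem (hf n) (hg n)
  mul_mem' {f g} hf hg n := by
    classical
    rw [coeff_mul]
    refine Ideal.sum_mem _ fun p _ ↦ Ideal.sum_mem _ fun q _ ↦ ?_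
    beta_reduce
    split_ifs with h
    · exact h ▸ multiPow_mul_le I p q (Ideal.mul_mem_mul (hf p) (hg q))
    · exact zero_mem _
  algebraMap_mem' a n := by
    classical
    rw [coe_algebraMap, Function.comp_apply, coeff_single, Finsupp.single_apply]
    split_ifs with h
    · simp [multiPow_of_nonpos I h.ge]
    · exact zero_mem _

theorem single_mem_extendedReesAlgebra {n : ι → ℤ} {a : A} :
    single n a ∈ extendedReesAlgebra I ↔ a ∈ multiPow I n := by
  refine ⟨fun h ↦ by simpa using h n, fun ha m ↦ ?_⟩
  classical
  rw [coeff_single, Finsupp.single_apply]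
  split_ifs with h
  · exact h ▸ ha
  · exact zero_mem _

variable {I}

theorem extendedReesAlgebra_le [DecidableEq ι] {S : Subalgebra A A[ι → ℤ]}
    (hI : ∀ j, ∀ a ∈ I j, single (Pi.single j 1) a ∈ S)
    (hinv : ∀ j, single (Pi.single j (-1)) 1 ∈ S) : extendedReesAlgebra I ≤ S := by
  have hsingle (j : ι) (z : ℤ) : I j ^ z.toNat ≤ coeffIdeal S.toSubmodule (Pi.single j z) := by
    obtain ⟨k, rfl | rfl⟩ := z.eq_nat_or_neg
    · have := (Ideal.pow_right_mono (hI j) k).trans (coeffIdeal_pow_le S (Pi.single j 1) k)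
      simpa [← Pi.single_smul] using this
    · have htop := (Ideal.eq_top_iff_one (coeffIdeal S.toSubmodule _)).2 (hinv j)
      have := coeffIdeal_pow_le S (Pi.single j (-1)) k
      rw [htop, Ideal.top_pow] at this
      simpa [← Pi.single_smul] using this
  have hmonomial (n : ι → ℤ) : multiPow I n ≤ coeffIdeal S.toSubmodule n := by
    refine (Finset.prod_le_prod' fun j _ ↦ hsingle j (n j)).trans ?_
    simpa only [Finset.univ_sum_single] using
      prod_coeffIdeal_le S Finset.univ fun j ↦ Pi.single j (n j)
  intro f hf
  rw [← sum_coeff_single f]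
  exact sum_mem fun n _ ↦ hmonomial n (hf n)

instance [IsNoetherianRing A] : IsNoetherianRing (extendedReesAlgebra I) := by
  classical
  choose G hG using fun j ↦ IsNoetherian.noetherian (I j)
  let gens : Set A[ι → ℤ] :=
    (⋃ j, single (Pi.single j 1) '' (G j : Set A)) ∪ Set.range fun j ↦ single (Pi.single j (-1)) 1
  have hfin : gens.Finite :=
    (Set.finite_iUnion fun j ↦ (G j).finite_toSet.image _).union (Set.finite_range _)
  have hgens : Algebra.adjoin A gens = extendedReesAlgebra I := by
    refine le_antisymm (Algebra.adjoin_le ?_) (extendedReesAlgebra_le (fun j ↦ ?_) fun j ↦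
      Algebra.subset_adjoin (Or.inr ⟨j, rfl⟩))
    · rintro _ (h | ⟨j, rfl⟩)
      · obtain ⟨j, g, hg, rfl⟩ := Set.mem_iUnion.1 h
        rw [SetLike.mem_coe, single_mem_extendedReesAlgebra, multiPow_single_one, ← hG j]
        exact Submodule.subset_span hg
      · simp [single_mem_extendedReesAlgebra, multiPow_single]
    · change I j ≤ coeffIdeal (Algebra.adjoin A gens).toSubmodule (Pi.single j 1)
      rw [← hG j, Submodule.span_le]
      exact fun g hg ↦ Algebra.subset_adjoin (Or.inl (Set.mem_iUnion.2 ⟨j, g, hg, rfl⟩))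
  have := (extendedReesAlgebra I).fg_iff_finiteType.1 (Subalgebra.fg_def.2 ⟨gens, hfin, hgens⟩)
  exact Algebra.FiniteType.isNoetherianRing A _

end ExtendedReesAlgebra

section ExtendedReesModule

open AddMonoidAlgebra TensorProduct

variable {A ι M : Type*} [CommRing A] [AddCommGroup M] [Module A M]

/-- The coefficient of `t ^ n`, where `A[ι → ℤ] ⊗[A] M` is thought of as the module of Laurent
polynomials with coefficients in `M`. -/
noncomputable def laurentCoeff (n : ι → ℤ) : A[ι → ℤ] ⊗[A] M →ₗ[A] M :=
  TensorProduct.lid A M ∘ₗ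
    LinearMap.rTensor M (Finsupp.lapply n ∘ₗ (coeffLinearEquiv A).toLinearMap)

theorem laurentCoeff_tmul (n : ι → ℤ) (f : A[ι → ℤ]) (m : M) :
    laurentCoeff n (f ⊗ₜ[A] m) = f.coeff n • m :=
  rfl

theorem laurentCoeff_single_smul (n d : ι → ℤ) (b : A) (z : A[ι → ℤ] ⊗[A] M) :
    laurentCoeff n ((single d b : A[ι → ℤ]) • z) = b • laurentCoeff (n - d) z := by
  induction z with
  | zero => simp
  | add x y hx hy => rw [smul_add, map_add, hx, hy, map_add, smul_add]
  | tmul f m =>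
    rw [smul_tmul', smul_eq_mul, laurentCoeff_tmul, laurentCoeff_tmul, coeff_single_mul_apply,
      mul_smul, neg_add_eq_sub]

theorem exists_forall_laurentCoeff_eq_zero (i : ι) (z : A[ι → ℤ] ⊗[A] M) :
    ∃ D : ℤ, ∀ n : ι → ℤ, D ≤ n i → laurentCoeff n z = 0 := by
  classical
  induction z with
  | zero => exact ⟨0, by simp⟩
  | add x y hx hy =>
    obtain ⟨D, hD⟩ := hx
    obtain ⟨D', hD'⟩ := hy
    refine ⟨max D D', fun n hn ↦ ?_⟩
    rw [map_add, hD n (le_of_max_le_left hn), hD' n (le_of_max_le_right hn), add_zero]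
  | tmul f m =>
    obtain ⟨D, hD⟩ := (f.coeff.support.image (· i)).bddAbove
    refine ⟨D + 1, fun n hn ↦ ?_⟩
    have hfn : f.coeff n = 0 := by
      by_contra h
      have := hD (Finset.mem_coe.2 (Finset.mem_image_of_mem _ (Finsupp.mem_support_iff.2 h)))
      omega
    rw [laurentCoeff_tmul, hfn, zero_smul]

theorem laurentCoeff_smul_eq_zero {i : ι} {f : A[ι → ℤ]} {z : A[ι → ℤ] ⊗[A] M} {c D : ℤ}
    (hf : ∀ d : ι → ℤ, c ≤ d i → f.coeff d = 0)
    (hz : ∀ n : ι → ℤ, D ≤ n i → laurentCoeff n z = 0) {n : ι → ℤ} (hn : c + D ≤ n i) :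
    laurentCoeff n (f • z) = 0 := by
  rw [← sum_coeff_single f, Finsupp.sum, Finset.sum_smul, map_sum]
  refine Finset.sum_eq_zero fun d hd ↦ ?_
  have hdc : d i < c := not_le.1 fun h ↦ Finsupp.mem_support_iff.1 hd (hf d h)
  rw [laurentCoeff_single_smul, hz (n - d) (by rw [Pi.sub_apply]; omega), smul_zero]

variable [Fintype ι] (I : ι → Ideal A)

variable (M) in
/-- The multigraded extended Rees module `⨁ₙ I₁^{n₁} ⋯ Iₛ^{nₛ} M t ^ n`, realized as the submodule
of `A[ι → ℤ] ⊗[A] M` generated over the extended Rees algebra by the elements `1 ⊗ₜ m`. -/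
noncomputable def extendedReesModule : Submodule (extendedReesAlgebra I) (A[ι → ℤ] ⊗[A] M) :=
  LinearMap.range ((TensorProduct.mk A A[ι → ℤ] M 1).liftBaseChange (extendedReesAlgebra I))

-- A shortcut: the search for this instance is slow.
noncomputable instance : Module (extendedReesAlgebra I) (extendedReesModule M I) :=
  (extendedReesModule M I).module

instance [Module.Finite A M] : Module.Finite (extendedReesAlgebra I) (extendedReesModule M I) :=
  Module.Finite.range _

instance [IsNoetherianRing A] [Module.Finite A M] :
    IsNoetherian (extendedReesAlgebra I) (extendedReesModule M I) :=
  isNoetherian_of_isNoetherianRing_of_finite (extendedReesAlgebra I) (extendedReesModule M I)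

variable {I}

theorem laurentCoeff_mem_of_mem_extendedReesModule {z : A[ι → ℤ] ⊗[A] M}
    (hz : z ∈ extendedReesModule M I) (n : ι → ℤ) :
    laurentCoeff n z ∈ multiPow I n • (⊤ : Submodule A M) := by
  obtain ⟨w, rfl⟩ := hz
  induction w with
  | zero => simp
  | add x y hx hy => rw [map_add, map_add]; exact add_mem hx hy
  | tmul f m =>
    rw [LinearMap.liftBaseChange_tmul, TensorProduct.mk_apply, Subalgebra.smul_def, smul_tmul',
      smul_eq_mul, mul_one]
    exact Submodule.smul_mem_smul (f.2 n) trivial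

theorem single_tmul_mem_extendedReesModule {n : ι → ℤ} {y : M}
    (hy : y ∈ multiPow I n • (⊤ : Submodule A M)) :
    (single n (1 : A)) ⊗ₜ[A] y ∈ extendedReesModule M I := by
  induction hy using Submodule.smul_induction_on' with
  | smul a ha m _ =>
    refine ⟨(⟨_, (single_mem_extendedReesAlgebra I).2 ha⟩ : extendedReesAlgebra I) ⊗ₜ m, ?_⟩
    rw [LinearMap.liftBaseChange_tmul, TensorProduct.mk_apply, Subalgebra.smul_def, smul_tmul',
      smul_eq_mul, mul_one, ← smul_tmul, smul_single, smul_eq_mul, mul_one]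
  | add x _ y _ hx hy => rw [tmul_add]; exact add_mem hx hy

variable (I) in
/-- The product `t₁⁻¹ ⋯ tₛ⁻¹` of the inverse variables. -/
noncomputable def invVar : extendedReesAlgebra I :=
  ⟨single (-1) 1, (single_mem_extendedReesAlgebra I).2 <| by
    rw [multiPow_of_nonpos I (by simp)]; trivial⟩

theorem coe_invVar_pow (k : ℕ) :
    ((invVar I ^ k : extendedReesAlgebra I) : A[ι → ℤ]) = single (-(k : ι → ℤ)) 1 := by
  rw [SubmonoidClass.coe_pow, invVar, single_pow, one_pow, smul_neg, nsmul_one]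

theorem isSMulRegular_invVar : IsSMulRegular (extendedReesModule M I) (invVar I) := by
  have hunit : IsUnit (single (-1) 1 : A[ι → ℤ]) := .of_mul_eq_one (single 1 1) <| by
    rw [single_mul_single, neg_add_cancel, mul_one, one_def]
  intro y z h
  exact Subtype.ext (hunit.isSMulRegular (A[ι → ℤ] ⊗[A] M) (congrArg Subtype.val h))

variable [DecidableEq ι]

variable (I) in
/-- Multiplication by the variable `t i`, as a map from `I i` to the extended Rees algebra. -/
noncomputable def mulVar (i : ι) : I i →ₗ[A] extendedReesAlgebra I :=
  (lsingle (Pi.single i 1) ∘ₗ (I i).subtype).codRestrict (extendedReesAlgebra I).toSubmodule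
    fun x ↦ (single_mem_extendedReesAlgebra I).2 (by simp [multiPow_single_one])

variable (I) in
/-- The ideal of the extended Rees algebra generated by the elements `x t i` with `x ∈ I i`. -/
noncomputable def varIdeal (i : ι) : Ideal (extendedReesAlgebra I) :=
  Ideal.span (Set.range (mulVar I i))

theorem single_mem_varIdeal_pow {i : ι} (c : ℕ) {n : ι → ℤ} (hn : c ≤ n i) {a : A}
    (ha : a ∈ multiPow I n) :
    ⟨single n a, (single_mem_extendedReesAlgebra I).2 ha⟩ ∈ varIdeal I i ^ c := by
  suffices h : multiPow I n ≤ coeffIdeal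
      (((varIdeal I i ^ c).restrictScalars A).map (extendedReesAlgebra I).val.toLinearMap) n by
    obtain ⟨r, hr, hra⟩ := h ha
    exact (Subtype.ext hra : r = ⟨single n a, _⟩) ▸ hr
  clear ha
  induction c generalizing n with
  | zero =>
    exact fun b hb ↦ ⟨⟨single n b, (single_mem_extendedReesAlgebra I).2 hb⟩, by simp, rfl⟩
  | succ c ih =>
    rw [multiPow_eq_mul I (by omega : 0 < n i), Ideal.mul_le]
    intro x hx b hb
    have hn' : c ≤ (n - Pi.single i 1 : ι → ℤ) i := by
      rw [Pi.sub_apply, Pi.single_eq_same]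
      omega
    obtain ⟨r, hr, hrb⟩ := ih hn' hb
    refine ⟨mulVar I i ⟨x, hx⟩ * r, ?_, ?_⟩
    · rw [pow_succ']
      exact Ideal.mul_mem_mul (Ideal.subset_span ⟨_, rfl⟩) hr
    · calc (single (Pi.single i 1) x : A[ι → ℤ]) * (r : A[ι → ℤ])
          = single (Pi.single i 1) x * single (n - Pi.single i 1) b := congrArg _ hrb
        _ = single n (x * b) := by rw [single_mul_single, add_sub_cancel]

theorem exists_mem_varIdeal_pow_forall_coeff_sub_eq_zero (i : ι) (c : ℕ)
    (r : extendedReesAlgebra I) : ∃ r' ∈ varIdeal I i ^ c,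
      ∀ d : ι → ℤ, c ≤ d i → ((r - r' : extendedReesAlgebra I) : A[ι → ℤ]).coeff d = 0 := by
  let f : A[ι → ℤ] := r
  refine ⟨∑ d ∈ f.coeff.support with (c : ℤ) ≤ d i,
    ⟨single d (f.coeff d), (single_mem_extendedReesAlgebra I).2 (r.2 d)⟩,
    sum_mem fun d hd ↦ single_mem_varIdeal_pow c (Finset.mem_filter.1 hd).2 (r.2 d),
    fun d hd ↦ ?_⟩
  rw [AddSubgroupClass.coe_sub, AddSubmonoidClass.coe_finsetSum, coeff_sub, Finsupp.sub_apply,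
    sub_eq_zero]
  simp [f, coeff_sum, Finsupp.finsetSum_apply, Finsupp.single_apply, hd, eq_comm]

theorem exists_forall_mem_varIdeal_pow_smul_laurentCoeff_eq (i : ι) (c : ℕ)
    {T : Submodule (extendedReesAlgebra I) (A[ι → ℤ] ⊗[A] M)} (hT : T.FG) :
    ∃ D : ℤ, ∀ n : ι → ℤ, D ≤ n i → ∀ y ∈ T, ∃ y' ∈ varIdeal I i ^ c • T,
      laurentCoeff n y' = laurentCoeff n y := by
  induction T, hT using Submodule.fg_induction with
  | singleton z =>
    obtain ⟨D, hD⟩ := exists_forall_laurentCoeff_eq_zero i z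
    refine ⟨c + D, fun n hn y hy ↦ ?_⟩
    obtain ⟨r, rfl⟩ := Submodule.mem_span_singleton.1 hy
    obtain ⟨r', hr', hrr'⟩ := exists_mem_varIdeal_pow_forall_coeff_sub_eq_zero i c r
    refine ⟨r' • z, Submodule.smul_mem_smul hr' (Submodule.mem_span_singleton_self z), ?_⟩
    rw [eq_comm, ← sub_eq_zero, ← map_sub, ← sub_smul]
    exact laurentCoeff_smul_eq_zero hrr' hD hn
  | sup T₁ _ _ _ h₁ h₂ =>
    obtain ⟨D₁, hD₁⟩ := h₁
    obtain ⟨D₂, hD₂⟩ := h₂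
    refine ⟨max D₁ D₂, fun n hn y hy ↦ ?_⟩
    obtain ⟨y₁, hy₁, y₂, hy₂, rfl⟩ := Submodule.mem_sup.1 hy
    obtain ⟨y₁', hy₁', h₁⟩ := hD₁ n (le_of_max_le_left hn) y₁ hy₁
    obtain ⟨y₂', hy₂', h₂⟩ := hD₂ n (le_of_max_le_right hn) y₂ hy₂
    refine ⟨y₁' + y₂', ?_, by rw [map_add, map_add, h₁, h₂]⟩
    rw [Submodule.smul_sup]
    exact Submodule.add_mem_sup hy₁' hy₂'

theorem coe_mulVar_smul (i : ι) (x : I i) (z : A[ι → ℤ] ⊗[A] M) :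
    mulVar I i x • z = (single (Pi.single i 1) (x : A) : A[ι → ℤ]) • z :=
  rfl

theorem mem_smulTopSaturation_of_eq_single_tmul {i : ι} {x : I i} {n : ι → ℤ} {m : M}
    {y : extendedReesModule M I}
    (hy : (y : A[ι → ℤ] ⊗[A] M) = single (n + Pi.single i 1) 1 ⊗ₜ ((x : A) • m)) :
    y ∈ smulTopSaturation (extendedReesModule M I) (invVar I) (mulVar I i x) := by
  obtain ⟨k, hk⟩ : ∃ k : ℕ, n ≤ (k : ι → ℤ) :=
    ⟨∑ j, (n j).toNat, fun j ↦ (n j).self_le_toNat.trans <| Int.ofNat_le.2 <|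
      Finset.single_le_sum_of_canonicallyOrdered (f := fun j ↦ (n j).toNat) (Finset.mem_univ j)⟩
  refine mem_smulTopSaturation.2
    ⟨k, ⟨_, single_tmul_mem_extendedReesModule (n := n - (k : ι → ℤ)) (y := m) ?_⟩,
      Subtype.ext ?_⟩
  · rw [multiPow_of_nonpos I (sub_nonpos.2 hk), Submodule.top_smul]
    trivial
  · change mulVar I i x • (single (n - (k : ι → ℤ)) 1 ⊗ₜ[A] m : A[ι → ℤ] ⊗[A] M) =
      invVar I ^ k • (y : A[ι → ℤ] ⊗[A] M)
    have hdeg : Pi.single i 1 + (n - (k : ι → ℤ)) = -(k : ι → ℤ) + (n + Pi.single i 1) := by abel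
    rw [hy, coe_mulVar_smul, Subalgebra.smul_def, coe_invVar_pow, smul_tmul', smul_tmul',
      smul_eq_mul, smul_eq_mul, single_mul_single, single_mul_single, ← smul_tmul, smul_single,
      one_mul, mul_one, smul_eq_mul, mul_one, hdeg]

theorem exists_forall_smul_mem_multiPow_imp [IsNoetherianRing A] [Module.Finite A M] {i : ι}
    {x : I i} (hx : ∀ P ∈ associatedPrimes (extendedReesAlgebra I)
      (QuotSMulTop (invVar I) (extendedReesModule M I)), mulVar I i x ∈ P → varIdeal I i ≤ P) :
    ∃ D : ℤ, ∀ n : ι → ℤ, D ≤ n i → ∀ m : M,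
      (x : A) • m ∈ multiPow I (n + Pi.single i 1) • (⊤ : Submodule A M) →
        ∃ w ∈ multiPow I n • (⊤ : Submodule A M), (x : A) • w = (x : A) • m := by
  obtain ⟨c, hc⟩ :=
    exists_forall_mem_pow_smul_smulTopSaturation_exists_smul_eq isSMulRegular_invVar hx
  let T := smulTopSaturation (extendedReesModule M I) (invVar I) (mulVar I i x)
  obtain ⟨D, hD⟩ := exists_forall_mem_varIdeal_pow_smul_laurentCoeff_eq i c
    ((IsNoetherian.noetherian T).map (extendedReesModule M I).subtype)
  refine ⟨D, fun n hn m hm ↦ ?_⟩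
  let y : extendedReesModule M I := ⟨_, single_tmul_mem_extendedReesModule hm⟩
  have hy : y ∈ T := mem_smulTopSaturation_of_eq_single_tmul rfl
  obtain ⟨y', hy', hyy'⟩ := hD (n + Pi.single i 1)
    (by rw [Pi.add_apply, Pi.single_eq_same]; omega) y ⟨y, hy, rfl⟩
  rw [← Submodule.map_smul''] at hy'
  obtain ⟨_, hy', rfl⟩ := hy'
  obtain ⟨w, rfl⟩ := hc _ hy'
  refine ⟨laurentCoeff n (w : A[ι → ℤ] ⊗[A] M),
    laurentCoeff_mem_of_mem_extendedReesModule w.2 n, ?_⟩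
  calc (x : A) • laurentCoeff n (w : A[ι → ℤ] ⊗[A] M)
      = laurentCoeff (n + Pi.single i 1) (mulVar I i x • (w : A[ι → ℤ] ⊗[A] M)) := by
        rw [coe_mulVar_smul, laurentCoeff_single_smul, add_sub_cancel_right]
    _ = laurentCoeff (n + Pi.single i 1) (y : A[ι → ℤ] ⊗[A] M) := hyy'
    _ = (x : A) • m := by simp [y, laurentCoeff_tmul]

end ExtendedReesModule

section WeakFC

open scoped Pointwise

variable {A M : Type*} [CommRing A] [AddCommGroup M] [Module A M]

theorem isReesSuperficial_of_forall_mem_associatedPrimes [IsNoetherianRing A] [Module.Finite A M]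
    {s : ℕ} {I : Fin s → Ideal A} {i : Fin s} {x : I i}
    (hx : ∀ P ∈ associatedPrimes (extendedReesAlgebra I)
      (QuotSMulTop (invVar I) (extendedReesModule M I)), mulVar I i x ∈ P → varIdeal I i ≤ P) :
    IsReesSuperficial A M I i x := by
  obtain ⟨D, hD⟩ := exists_forall_smul_mem_multiPow_imp hx
  refine ⟨x.2, D.toNat, fun n hn ↦ ?_⟩
  have hprod : ∏ j, I j ^ (n j + if j = i then 1 else 0) =
      multiPow I ((fun j ↦ (n j : ℤ)) + Pi.single i 1) := by
    rw [← multiPow_natCast]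
    congr 1
    ext j
    simp [Pi.single_apply]
  rw [hprod, ← multiPow_natCast, Submodule.ideal_span_singleton_smul,
    Submodule.ideal_span_singleton_smul]
  apply le_antisymm
  · rintro _ ⟨⟨m, -, rfl⟩, hm⟩
    exact hD _ (by omega) m hm
  · refine le_inf (smul_mono_right _ le_top) ?_
    rw [← Submodule.ideal_span_singleton_smul, ← Submodule.mul_smul, add_comm]
    refine Submodule.smul_mono_left (le_trans (Ideal.mul_mono_left ?_) (multiPow_mul_le I _ _))
    rw [Ideal.span_singleton_le_iff_mem, multiPow_single_one]
    exact x.2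

theorem mem_satSub_of_forall_mem_associatedPrimes [IsNoetherianRing A] [Module.Finite A M]
    {J : Ideal A} {x : A} (hx : ∀ p ∈ associatedPrimes A M, x ∈ p → J ≤ p) {m : M}
    (hm : x • m = 0) : m ∈ satSub A M J := by
  obtain ⟨c, hc⟩ := exists_torsionBy_le_torsionBySet_pow hx
  exact le_iSup (fun n ↦ Submodule.torsionBySet A M ((J ^ n : Ideal A) : Set A)) c (hc hm)

end WeakFC

theorem exists_zariskiOpen_weakFC_general
    (A : Type*) [CommRing A] [IsNoetherianRing A] [IsLocalRing A]
    [Infinite (ResidueField A)]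
    (M : Type*) [AddCommGroup M] [Module A M] [Module.Finite A M]
    {s : ℕ} (I : Fin s → Ideal A) (i : Fin s) :
    ∃ U : Set (↥(I i) ⧸ ((maximalIdeal A) • (⊤ : Submodule A ↥(I i)))),
      IsZariskiOpen A _ U ∧ U.Nonempty ∧
      ∀ (x : A) (hx : x ∈ I i),
        Submodule.Quotient.mk (⟨x, hx⟩ : I i) ∈ U →
          IsReesSuperficial A M I i x ∧
          (∀ m : M, x • m = 0 → m ∈ satSub A M (∏ i, I i)) := by
  let S : Set (Submodule A (I i)) :=
    (fun P : Ideal (extendedReesAlgebra I) ↦ (P.restrictScalars A).comap (mulVar I i)) ''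
      associatedPrimes (extendedReesAlgebra I) (QuotSMulTop (invVar I) (extendedReesModule M I)) ∪
    (fun p : Ideal A ↦ Submodule.comap (I i).subtype p) '' associatedPrimes A M
  have hS : S.Finite :=
    ((associatedPrimes.finite _ _).image _).union ((associatedPrimes.finite A M).image _)
  obtain ⟨U, hU, hU', hUS⟩ := exists_isZariskiOpen_forall_mem_imp_eq_top hS
  refine ⟨U, hU, hU', fun x hx hxU ↦ ⟨?_, fun m ↦ ?_⟩⟩
  · refine isReesSuperficial_of_forall_mem_associatedPrimes (x := ⟨x, hx⟩) fun P hP hxP ↦ ?_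
    have htop := hUS _ hxU _ (Or.inl ⟨P, hP, rfl⟩) hxP
    exact Ideal.span_le.2 (Set.range_subset_iff.2 fun y ↦ Submodule.eq_top_iff'.1 htop y)
  · refine mem_satSub_of_forall_mem_associatedPrimes fun p hp hxp ↦ ?_
    have htop := hUS _ hxU _ (Or.inr ⟨p, hp, rfl⟩) hxp
    exact (Ideal.prod_le_inf.trans (Finset.inf_le (Finset.mem_univ i))).trans
      (Submodule.comap_subtype_eq_top.1 htop)

/-- If `I = I 1 ⋯ I s ⊄ √(Ann_A M)`, then for each `i` there is a
non-empty Zariski open subset `U` of `I i / m I i` such that any `x ∈ I i` whose image lies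
in `U` is a weak-(FC)-element of `(I 1, …, I s)` with respect to `M`, i.e. a Rees
superficial element which is `I`-filter-regular with respect to `M`. -/
theorem exists_zariskiOpen_weakFC
    (A : Type*) [CommRing A] [IsNoetherianRing A] [IsLocalRing A]
    [Infinite (ResidueField A)]
    (M : Type*) [AddCommGroup M] [Module A M] [Module.Finite A M]
    {s : ℕ} (I : Fin s → Ideal A)
    (hI : ¬ (∏ i, I i) ≤ (Module.annihilator A M).radical)
    (i : Fin s) :
    ∃ U : Set (↥(I i) ⧸ ((maximalIdeal A) • (⊤ : Submodule A ↥(I i)))),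
      IsZariskiOpen A _ U ∧ U.Nonempty ∧
      ∀ (x : A) (hx : x ∈ I i),
        Submodule.Quotient.mk (⟨x, hx⟩ : I i) ∈ U →
          IsReesSuperficial A M I i x ∧
          (∀ m : M, x • m = 0 → m ∈ satSub A M (∏ i, I i)) :=
  exists_zariskiOpen_weakFC_general A M I i
end
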